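/- arXiv:2103.02321 — 2 statements merged into one kernel-verified Lean document; each statement's English description precedes it below -/
import Mathlib

section
/- Let u be quasi-definite with SMOP (P_n) and recurrence coefficients (a_n, b_n), let c ∈ ℂ, suppose ũ = (x−c)u is quasi-definite (so ũ_0 = u_1 − c·u_0 ≠ 0), and define R_n(x) = (u_0/ũ_0)·[(x−c)·P^{(1)}_n(x) − P_{n+1}(x)], where (P^{(1)}_n) are the associated polynomials of the first kind of u. Then (R_n)_{n≥0} is the co-recursive sequence of parameter α = −a_1·u_0/ũ_0 with respect to the associated functional u^{(1)}: R_0 = 1, R_1(x) = P^{(1)}_1(x) − α, and x·R_n = R_{n+1} + b_{n+1}·R_n + a_{n+1}·R_{n−1} for all n ≥ 1. -/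
open Polynomial

noncomputable section

/-- Apply a linear functional (identified with its moment sequence) to a polynomial:
`⟨u, p⟩ = Σ_k c_k u_k` for `p = Σ_k c_k x^k`. -/
def fapply (u : ℕ → ℂ) (p : Polynomial ℂ) : ℂ := p.sum fun k ck => ck * u k

/-- `P` is the sequence of monic orthogonal polynomials (SMOP) of the functional `u`. -/
def IsSMOP (u : ℕ → ℂ) (P : ℕ → Polynomial ℂ) : Prop :=
  (∀ n, (P n).Monic) ∧ (∀ n, (P n).natDegree = n) ∧
    (∀ n m, n ≠ m → fapply u (P n * P m) = 0) ∧ (∀ n, fapply u (P n * P n) ≠ 0)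

/-- A functional is quasi-definite iff it admits a SMOP. -/
def IsQuasiDefinite (u : ℕ → ℂ) : Prop := ∃ P, IsSMOP u P

/-- Three term recurrence relation `x P_n = P_{n+1} + b_n P_n + a_n P_{n-1}`,
with `P_{-1} = 0`, `P_0 = 1`. -/
def HasTTRR (P : ℕ → Polynomial ℂ) (a b : ℕ → ℂ) : Prop :=
  P 0 = 1 ∧ X * P 0 = P 1 + C (b 0) * P 0 ∧
    ∀ n, 1 ≤ n → X * P n = P (n + 1) + C (b n) * P n + C (a n) * P (n - 1)

/-- Wronskian `W(p,q)(x) = p(x) q'(x) - p'(x) q(x)`. -/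
def Wr (p q : Polynomial ℂ) (x : ℂ) : ℂ :=
  p.eval x * (derivative q).eval x - (derivative p).eval x * q.eval x

/-- The monic Jacobi matrix with diagonal `b`, superdiagonal `1` and subdiagonal
entries `J_{n+1,n} = a_{n+1}`. -/
def jacobi (a b : ℕ → ℂ) (i j : ℕ) : ℂ :=
  if i = j then b i else if j = i + 1 then 1 else if i = j + 1 then a i else 0

/-- Entrywise product of semi-infinite (banded) matrices; the sum has finite support. -/
def mprod (A B : ℕ → ℕ → ℂ) (i j : ℕ) : ℂ := ∑' k, A i k * B k j

/-- `w` is the moment sequence of the inverse functional `u⁻¹`: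
the convolution of the moments of `u` and `w` is `(1,0,0,…)`. -/
def IsInverseMoments (u w : ℕ → ℂ) : Prop :=
  ∀ n, ∑ k ∈ Finset.range (n + 1), u k * w (n - k) = if n = 0 then 1 else 0

/-- Apply a functional `u` to the second (outer) variable `y` of a bivariate polynomial
`D = Σ_k q_k(x) y^k`, giving `Σ_k u_k q_k(x)`. -/
def fapplyY (u : ℕ → ℂ) (D : Polynomial (Polynomial ℂ)) : Polynomial ℂ :=
  D.sum fun k q => u k • q

/-!
Both `P^{(1)}_n` and the shift `P_{n+1}` solve the recurrence with coefficients
`(a_{n+1}, b_{n+1})`. The solutions form a module over the polynomials, so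
`(x - c) P^{(1)}_n - P_{n+1}` is again a solution and only `R_0` and `R_1` remain to be computed.
Since `⟨u, P_1⟩ = 0` means `u_1 = b_0 u_0`, we have `ũ_0 = (b_0 - c) u_0`, so `u_0 / ũ_0` is exactly
the factor that normalizes `R_0` to `1`.
-/

section Recurrence

variable {A : Type*} [CommRing A] {a b : ℕ → A} {α : A} {P Q : ℕ → A[X]}

/-- The solutions `(Q_n)` of the difference equation `x Q_n = Q_{n+1} + b_n Q_n + a_n Q_{n-1}`,
`n ≥ 1`, with no condition on `Q_0` and `Q_1`, as a module over `A[X]`. -/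
def recurrenceSolutions (a b : ℕ → A) : Submodule A[X] (ℕ → A[X]) where
  carrier := {Q | ∀ n, 1 ≤ n → X * Q n = Q (n + 1) + C (b n) * Q n + C (a n) * Q (n - 1)}
  zero_mem' n _ := by simp
  add_mem' hP hQ n hn := by
    simp only [Pi.add_apply]
    linear_combination hP n hn + hQ n hn
  smul_mem' p Q hQ n hn := by
    simp only [Pi.smul_apply, smul_eq_mul]
    linear_combination p * hQ n hn

theorem shift_mem_recurrenceSolutions (hQ : Q ∈ recurrenceSolutions a b) :
    (fun n => Q (n + 1)) ∈
      recurrenceSolutions (fun n => a (n + 1)) (fun n => b (n + 1)) := by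
  intro n hn
  simpa [Nat.sub_add_cancel hn] using hQ (n + 1) n.succ_pos

/-- `Q` is the co-recursive sequence of parameter `α` for the recurrence coefficients `(a, b)`.
The parameter `α = 0` gives the sequence of monic polynomials with these coefficients itself. -/
structure IsCoRecursive (a b : ℕ → A) (α : A) (Q : ℕ → A[X]) : Prop where
  zero : Q 0 = 1
  one : Q 1 = X - C (b 0) - C α
  mem_recurrenceSolutions : Q ∈ recurrenceSolutions a b

namespace IsCoRecursive

theorem two (hQ : IsCoRecursive a b α Q) : Q 2 = (X - C (b 1)) * Q 1 - C (a 1) := by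
  have h : X * Q 1 = Q 2 + C (b 1) * Q 1 + C (a 1) * Q 0 :=
    hQ.mem_recurrenceSolutions 1 le_rfl
  rw [hQ.zero] at h
  linear_combination -h

theorem one_eq_sub (hQ : IsCoRecursive a b α Q) (hP : IsCoRecursive a b 0 P) :
    Q 1 = P 1 - C α := by
  rw [hQ.one, hP.one, C_0, sub_zero]

theorem mul_associated_sub_shift {γ c : A} (hP : IsCoRecursive a b 0 P)
    (hQ : IsCoRecursive (fun n => a (n + 1)) (fun n => b (n + 1)) 0 Q)
    (hγ : γ * (b 0 - c) = 1) :
    IsCoRecursive (fun n => a (n + 1)) (fun n => b (n + 1)) (-(a 1 * γ))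
      (fun n => C γ * ((X - C c) * Q n - P (n + 1))) where
  zero := by
    rw [hQ.zero, hP.one, C_0]
    calc C γ * ((X - C c) * 1 - (X - C (b 0) - 0)) = C (γ * (b 0 - c)) := by
          rw [C_mul, C_sub]; ring
      _ = 1 := by rw [hγ, C_1]
  one := by
    have hγ' : C γ * (C (b 0) - C c) = 1 := by rw [← C_sub, ← C_mul, hγ, C_1]
    rw [hP.two, hP.one, hQ.one, C_neg, C_mul, C_0]
    linear_combination (X - C (b 1)) * hγ'
  mem_recurrenceSolutions :=
    Submodule.smul_mem _ (C γ) <|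
      Submodule.sub_mem _ (Submodule.smul_mem _ (X - C c) hQ.mem_recurrenceSolutions)
        (shift_mem_recurrenceSolutions hP.mem_recurrenceSolutions)

end IsCoRecursive

end Recurrence

theorem HasTTRR.isCoRecursive_zero {P : ℕ → ℂ[X]} {a b : ℕ → ℂ} (hP : HasTTRR P a b) :
    IsCoRecursive a b 0 P where
  zero := hP.1
  one := by
    have h := hP.2.1
    rw [hP.1] at h
    rw [C_0]
    linear_combination -h
  mem_recurrenceSolutions := hP.2.2

/-- The linear functional `p ↦ ⟨u, p⟩` with moments `⟨u, x^k⟩ = u k`; over `ℂ` it is `fapply u`. -/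
def momentFunctional {A : Type*} [CommSemiring A] (u : ℕ → A) : A[X] →ₗ[A] A :=
  lsum fun k => LinearMap.mulRight A (u k)

theorem momentFunctional_X_sub_C {A : Type*} [CommRing A] (u : ℕ → A) (c : A) :
    momentFunctional u (X - C c) = u 1 - c * u 0 := by
  rw [map_sub]
  simp [momentFunctional, sum_X_index, sum_C_index]

theorem IsSMOP.momentFunctional_eq_zero {u : ℕ → ℂ} {P : ℕ → ℂ[X]} (hP : IsSMOP u P) {n : ℕ}
    (hn : n ≠ 0) : momentFunctional u (P n) = 0 := by
  have hP0 : P 0 = 1 := (hP.1 0).natDegree_eq_zero.mp (hP.2.1 0)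
  have h : momentFunctional u (P n * P 0) = 0 := hP.2.2.1 n 0 hn
  rwa [hP0, mul_one] at h

theorem stmt_12_general {K : Type*} [Field K] {u : ℕ → K} {c : K} {a b : ℕ → K}
    {P P1 : ℕ → K[X]} (hP : IsCoRecursive a b 0 P)
    (hP1 : IsCoRecursive (fun n => a (n + 1)) (fun n => b (n + 1)) 0 P1)
    (horth : momentFunctional u (P 1) = 0) (hc : u 1 - c * u 0 ≠ 0) :
    IsCoRecursive (fun n => a (n + 1)) (fun n => b (n + 1)) (-(a 1) * u 0 / (u 1 - c * u 0))
      (fun n => C (u 0 / (u 1 - c * u 0)) * ((X - C c) * P1 n - P (n + 1))) := by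
  have hu1 : u 1 - b 0 * u 0 = 0 := by
    rwa [hP.one, C_0, sub_zero, momentFunctional_X_sub_C] at horth
  have hγ : u 0 / (u 1 - c * u 0) * (b 0 - c) = 1 := by
    rw [div_mul_eq_mul_div, div_eq_one_iff_eq hc]
    linear_combination -hu1
  rw [neg_mul, neg_div, mul_div_assoc]
  exact hP.mul_associated_sub_shift hP1 hγ

/-- the polynomials `R_n(x) = (u_0/ũ_0)[(x-c)P^{(1)}_n(x) - P_{n+1}(x)]` form
the co-recursive sequence of parameter `α = -a_1 u_0/ũ_0` with respect to `u^{(1)}`. -/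
theorem stmt_12 (u : ℕ → ℂ) (c : ℂ) (P : ℕ → Polynomial ℂ) (hP : IsSMOP u P)
    (a b : ℕ → ℂ) (hrec : HasTTRR P a b) (ha : ∀ n, 1 ≤ n → a n ≠ 0) (hu0 : u 0 ≠ 0)
    (P1 : ℕ → Polynomial ℂ)
    (hP1 : HasTTRR P1 (fun n => a (n + 1)) (fun n => b (n + 1)))
    (ut : ℕ → ℂ) (hut : ∀ n, ut n = u (n + 1) - c * u n) (hut0 : ut 0 ≠ 0)
    (hutq : IsQuasiDefinite ut)
    (R : ℕ → Polynomial ℂ)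
    (hR : ∀ n, R n = C (u 0 / ut 0) * ((X - C c) * P1 n - P (n + 1))) :
    R 0 = 1 ∧ R 1 = P1 1 - C (-(a 1) * u 0 / ut 0) ∧
      ∀ n, 1 ≤ n → X * R n = R (n + 1) + C (b (n + 1)) * R n + C (a (n + 1)) * R (n - 1) := by
  have hcorec := stmt_12_general hrec.isCoRecursive_zero hP1.isCoRecursive_zero
    (hP.momentFunctional_eq_zero one_ne_zero) (hut 0 ▸ hut0)
  rw [← hut 0, ← funext hR] at hcorec
  exact ⟨hcorec.zero, hcorec.one_eq_sub hP1.isCoRecursive_zero, hcorec.mem_recurrenceSolutions⟩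
end
end

section
/- Let u be quasi-definite with SMOP (P_n) and recurrence coefficients (a_n, b_n), let c ∈ ℂ with P_n(c) ≠ 0 for all n, suppose ũ = (x−c)u is quasi-definite with SMOP (P̃_n) and associated first-kind polynomials (P̃^{(1)}_n), and let u^α be a linear functional whose SMOP is the sequence R_n(x) = (u_0/ũ_0)·[(x−c)·P^{(1)}_n(x) − P_{n+1}(x)]. Then the sequence (P̃^{(1)}_n)_{n≥0} is orthogonal with respect to the Christoffel transformation (x−c)u^α: ⟨(x−c)u^α, P̃^{(1)}_n·P̃^{(1)}_m⟩ = 0 for n ≠ m and ⟨(x−c)u^α, (P̃^{(1)}_n)²⟩ ≠ 0 for all n. In other words, ũ^{(1)} is a canonical Christoffel transformation of u^α. -/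
open Polynomial

noncomputable section

/-!
The two Christoffel relations `P̃_{n+1} + l_n P̃_n = P_{n+1}` and
`(x - c) P̃_n = P_{n+1} - d_n P_n` say that the Jacobi matrices of `(P_n)` and `(P̃_n)` are
`c + LU` and `c + UL`, with `L` unit lower bidiagonal (subdiagonal `l`) and `U` upper bidiagonal
(diagonal `-d`, superdiagonal `1`). Deleting the first row and column of `UL` gives the product
`U'L'` of the truncated factors, whereas doing so in `LU` gives `L'U'` up to the entry `l_0` in the
corner. Passing from `P^{(1)}` to `R` subtracts exactly that corner entry,
so `R` and `P̃^{(1)}` satisfy the Christoffel relations with `d` and `l` shifted by one.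
-/

theorem fapply_eq_lsum (u : ℕ → ℂ) (p : ℂ[X]) :
    fapply u p = Polynomial.lsum (fun k => LinearMap.mulRight ℂ (u k)) p := by
  simp [fapply, Polynomial.lsum_apply]

theorem fapply_zero (u : ℕ → ℂ) : fapply u 0 = 0 := by
  rw [fapply_eq_lsum, map_zero]

theorem fapply_add (u : ℕ → ℂ) (p q : ℂ[X]) :
    fapply u (p + q) = fapply u p + fapply u q := by
  simp only [fapply_eq_lsum, map_add]

theorem fapply_sub (u : ℕ → ℂ) (p q : ℂ[X]) :
    fapply u (p - q) = fapply u p - fapply u q := by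
  simp only [fapply_eq_lsum, map_sub]

theorem fapply_C_mul (u : ℕ → ℂ) (r : ℂ) (p : ℂ[X]) :
    fapply u (C r * p) = r * fapply u p := by
  simp only [fapply_eq_lsum, ← smul_eq_C_mul, map_smul, smul_eq_mul]

theorem fapply_mul_C_mul (u : ℕ → ℂ) (r : ℂ) (p q : ℂ[X]) :
    fapply u (p * (C r * q)) = r * fapply u (p * q) := by
  rw [mul_left_comm, fapply_C_mul]

theorem fapply_monomial (u : ℕ → ℂ) (n : ℕ) (r : ℂ) : fapply u (monomial n r) = r * u n :=
  sum_monomial_index r _ (zero_mul _)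

/-- Moments of the canonical Christoffel transformation `(x - c)u`. -/
def christoffel (c : ℂ) (u : ℕ → ℂ) : ℕ → ℂ := fun n => u (n + 1) - c * u n

theorem fapply_christoffel (c : ℂ) (u : ℕ → ℂ) (p : ℂ[X]) :
    fapply (christoffel c u) p = fapply u ((X - C c) * p) := by
  induction p using Polynomial.induction_on' with
  | add p q hp hq => rw [mul_add, fapply_add, fapply_add, hp, hq]
  | monomial n r =>
    rw [sub_mul, X_mul_monomial, fapply_sub, fapply_C_mul]
    simp only [fapply_monomial, christoffel]
    ring

theorem degree_lt_of_isMonicOfDegree {A : Type*} [Semiring A] {p : A[X]} {m n : ℕ}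
    (hp : IsMonicOfDegree p m) (hmn : m < n) : p.degree < n :=
  degree_le_natDegree.trans_lt (by rw [hp.natDegree_eq]; exact_mod_cast hmn)

theorem isMonicOfDegree_X_sub_C_mul {A : Type*} [Ring A] [Nontrivial A] {p : A[X]} {n : ℕ} (c : A)
    (hp : IsMonicOfDegree p n) : IsMonicOfDegree ((X - C c) * p) (n + 1) :=
  add_comm n 1 ▸ (isMonicOfDegree_X_sub_one c).mul hp

theorem degree_sub_C_coeff_mul_lt {A : Type*} [Ring A] {p q : A[X]} {n : ℕ}
    (hp : IsMonicOfDegree p n) (hq : q.natDegree ≤ n) :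
    (q - C (q.coeff n) * p).degree < n := by
  rw [degree_lt_iff_coeff_zero]
  intro m hm
  rw [coeff_sub, coeff_C_mul]
  rcases hm.eq_or_lt with rfl | hlt
  · rw [← hp.natDegree_eq, hp.monic.coeff_natDegree, mul_one, sub_self]
  · rw [coeff_eq_zero_of_natDegree_lt (hq.trans_lt hlt),
      coeff_eq_zero_of_natDegree_lt (hp.natDegree_eq.trans_lt hlt), mul_zero, sub_zero]

namespace IsSMOP

variable {u : ℕ → ℂ} {P : ℕ → ℂ[X]}

theorem isMonicOfDegree (hP : IsSMOP u P) (n : ℕ) : IsMonicOfDegree (P n) n :=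
  ⟨hP.2.1 n, hP.1 n⟩

theorem fapply_mul_of_ne (hP : IsSMOP u P) {m n : ℕ} (hmn : m ≠ n) : fapply u (P m * P n) = 0 :=
  hP.2.2.1 m n hmn

theorem fapply_mul_self_ne_zero (hP : IsSMOP u P) (n : ℕ) : fapply u (P n * P n) ≠ 0 :=
  hP.2.2.2 n

theorem fapply_mul_of_degree_lt (hP : IsSMOP u P) {n : ℕ} {q : ℂ[X]} (hq : q.degree < n) :
    fapply u (P n * q) = 0 := by
  let S : Polynomial.Sequence ℂ :=
    ⟨P, fun k => degree_eq_iff_natDegree_eq (hP.isMonicOfDegree k).ne_zero |>.mpr (hP.2.1 k)⟩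
  have hspan : q ∈ Submodule.span ℂ (P '' Set.Iio n) := by
    rw [S.span_degreeLT fun k _ => (hP.isMonicOfDegree k).leadingCoeff_eq ▸ isUnit_one]
    exact mem_degreeLT.mpr hq
  clear hq
  induction hspan using Submodule.span_induction with
  | mem _ h =>
    obtain ⟨m, hm, rfl⟩ := h
    exact hP.fapply_mul_of_ne (ne_of_gt hm)
  | zero => rw [mul_zero, fapply_zero]
  | add p q _ _ hp hq => rw [mul_add, fapply_add, hp, hq, add_zero]
  | smul r p _ hp => rw [smul_eq_C_mul, fapply_mul_C_mul, hp, mul_zero]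

theorem fapply_mul_of_natDegree_le (hP : IsSMOP u P) {n : ℕ} {q : ℂ[X]} (hq : q.natDegree ≤ n) :
    fapply u (P n * q) = q.coeff n * fapply u (P n * P n) := by
  have h := hP.fapply_mul_of_degree_lt (degree_sub_C_coeff_mul_lt (hP.isMonicOfDegree n) hq)
  rwa [mul_sub, fapply_sub, fapply_mul_C_mul, sub_eq_zero] at h

theorem fapply_mul_of_isMonicOfDegree (hP : IsSMOP u P) {n : ℕ} {q : ℂ[X]}
    (hq : IsMonicOfDegree q n) : fapply u (P n * q) = fapply u (P n * P n) := by
  rw [hP.fapply_mul_of_natDegree_le hq.natDegree_eq.le,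
    ← hq.natDegree_eq, hq.monic.coeff_natDegree, one_mul]

theorem eq_zero_of_fapply_mul_eq_zero (hP : IsSMOP u P) {n : ℕ} {q : ℂ[X]} (hq : q.degree < n)
    (horth : ∀ m < n, fapply u (P m * q) = 0) : q = 0 := by
  induction n with
  | zero => exact degree_eq_bot.mp (Nat.WithBot.lt_zero_iff.mp hq)
  | succ n ih =>
    have hle : q.natDegree ≤ n := natDegree_le_of_degree_le (Order.lt_succ_iff.mp hq)
    have hcoeff : q.coeff n = 0 := by
      have h := horth n n.lt_succ_self
      rw [hP.fapply_mul_of_natDegree_le hle] at h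
      exact (mul_eq_zero.mp h).resolve_right (hP.fapply_mul_self_ne_zero n)
    have hlt := degree_sub_C_coeff_mul_lt (hP.isMonicOfDegree n) hle
    rw [hcoeff, C_0, zero_mul, sub_zero] at hlt
    exact ih hlt fun m hm => horth m (hm.trans n.lt_succ_self)

theorem eq_C_coeff_mul_of_fapply_mul_eq_zero (hP : IsSMOP u P) {n : ℕ} {q : ℂ[X]}
    (hq : q.natDegree ≤ n) (horth : ∀ m < n, fapply u (P m * q) = 0) :
    q = C (q.coeff n) * P n := by
  refine sub_eq_zero.mp (hP.eq_zero_of_fapply_mul_eq_zero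
    (degree_sub_C_coeff_mul_lt (hP.isMonicOfDegree n) hq) fun m hm => ?_)
  rw [mul_sub, fapply_sub, fapply_mul_C_mul, horth m hm, hP.fapply_mul_of_ne hm.ne, mul_zero,
    sub_zero]

end IsSMOP

/-- The two relations between a sequence `S` and its Christoffel transform `T` at `c`. -/
structure IsChristoffelPair (c : ℂ) (d l : ℕ → ℂ) (S T : ℕ → ℂ[X]) : Prop where
  zero : S 0 = T 0
  succ : ∀ n, S (n + 1) = T (n + 1) + C (l n) * T n
  X_sub_C_mul : ∀ n, (X - C c) * T n = S (n + 1) - C (d n) * S n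

namespace IsSMOP

variable {u : ℕ → ℂ} {c : ℂ} {P Q : ℕ → ℂ[X]}

theorem exists_X_sub_C_mul_eq (hP : IsSMOP u P) (hQ : IsSMOP (christoffel c u) Q) (n : ℕ) :
    ∃ d, d ≠ 0 ∧ (X - C c) * Q n = P (n + 1) - C d * P n := by
  set q := P (n + 1) - (X - C c) * Q n with hq
  have hdeg : q.natDegree ≤ n := Nat.le_of_lt_succ <|
    (hP.isMonicOfDegree (n + 1)).natDegree_sub_lt n.succ_ne_zero
      (isMonicOfDegree_X_sub_C_mul c (hQ.isMonicOfDegree n))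
  have hfapply : ∀ m ≤ n, fapply u (P m * q) = -fapply (christoffel c u) (Q n * P m) := by
    intro m hm
    rw [hq, mul_sub, fapply_sub, hP.fapply_mul_of_ne (by omega), fapply_christoffel, zero_sub,
      mul_comm (P m), mul_assoc]
  have hqP : q = C (q.coeff n) * P n := by
    refine hP.eq_C_coeff_mul_of_fapply_mul_eq_zero hdeg fun m hm => ?_
    rw [hfapply m hm.le, neg_eq_zero]
    exact hQ.fapply_mul_of_degree_lt (degree_lt_of_isMonicOfDegree (hP.isMonicOfDegree m) hm)
  refine ⟨q.coeff n, fun hzero => ?_, by rw [← hqP, hq, sub_sub_cancel]⟩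
  have hnorm := hfapply n le_rfl
  rw [hQ.fapply_mul_of_isMonicOfDegree (hP.isMonicOfDegree n), hqP, hzero, C_0, zero_mul,
    mul_zero, fapply_zero, zero_eq_neg] at hnorm
  exact hQ.fapply_mul_self_ne_zero n hnorm

theorem exists_succ_eq_add_C_mul (hP : IsSMOP u P) (hQ : IsSMOP (christoffel c u) Q) (n : ℕ) :
    ∃ l, P (n + 1) = Q (n + 1) + C l * Q n := by
  set q := P (n + 1) - Q (n + 1) with hq
  have hdeg : q.natDegree ≤ n := Nat.le_of_lt_succ <|
    (hP.isMonicOfDegree (n + 1)).natDegree_sub_lt n.succ_ne_zero (hQ.isMonicOfDegree (n + 1))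
  have hqQ : q = C (q.coeff n) * Q n := by
    refine hQ.eq_C_coeff_mul_of_fapply_mul_eq_zero hdeg fun m hm => ?_
    have hlt : ((X - C c) * Q m).degree < ↑(n + 1) := degree_lt_of_isMonicOfDegree
      (isMonicOfDegree_X_sub_C_mul c (hQ.isMonicOfDegree m)) (Nat.succ_lt_succ hm)
    rw [hq, mul_sub, fapply_sub, hQ.fapply_mul_of_ne (by omega), sub_zero, fapply_christoffel,
      ← mul_assoc, mul_comm, hP.fapply_mul_of_degree_lt hlt]
  exact ⟨q.coeff n, by rw [← hqQ, hq, add_sub_cancel]⟩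

theorem exists_isChristoffelPair (hP : IsSMOP u P) (hQ : IsSMOP (christoffel c u) Q) :
    ∃ d l : ℕ → ℂ, (∀ n, d n ≠ 0) ∧ IsChristoffelPair c d l P Q := by
  choose d hd hdeq using hP.exists_X_sub_C_mul_eq hQ
  choose l hleq using hP.exists_succ_eq_add_C_mul hQ
  have hzero : P 0 = Q 0 := by
    rw [isMonicOfDegree_zero_iff.mp (hP.isMonicOfDegree 0),
      isMonicOfDegree_zero_iff.mp (hQ.isMonicOfDegree 0)]
  exact ⟨d, l, hd, hzero, hleq, hdeq⟩

theorem christoffel_of_X_sub_C_mul {d : ℕ → ℂ} (hP : IsSMOP u P) (hd : ∀ n, d n ≠ 0)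
    (hQ : ∀ n, (X - C c) * Q n = P (n + 1) - C (d n) * P n) :
    IsSMOP (christoffel c u) Q := by
  have hmonic : ∀ n, IsMonicOfDegree (Q n) n := by
    intro n
    refine (isMonicOfDegree_X_sub_one c).of_mul_left ?_
    rw [hQ, add_comm 1]
    refine (hP.isMonicOfDegree (n + 1)).sub (Nat.lt_succ_of_le ?_)
    exact (natDegree_C_mul_le _ _).trans_eq (hP.isMonicOfDegree n).natDegree_eq
  have hfapply : ∀ {m n}, m ≤ n →
      fapply (christoffel c u) (Q n * Q m) = -(d n * fapply u (P n * Q m)) := by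
    intro m n hmn
    have hdeg : (Q m).degree < ↑(n + 1) :=
      degree_lt_of_isMonicOfDegree (hmonic m) (Nat.lt_succ_of_le hmn)
    rw [fapply_christoffel, ← mul_assoc, hQ, sub_mul, fapply_sub, mul_assoc, fapply_C_mul,
      hP.fapply_mul_of_degree_lt hdeg, zero_sub]
  have horth : ∀ {m n}, m < n → fapply (christoffel c u) (Q n * Q m) = 0 := by
    intro m n hmn
    rw [hfapply hmn.le, hP.fapply_mul_of_degree_lt (degree_lt_of_isMonicOfDegree (hmonic m) hmn),
      mul_zero, neg_zero]
  refine ⟨fun n => (hmonic n).monic, fun n => (hmonic n).natDegree_eq, fun n m hnm => ?_,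
    fun n => ?_⟩
  · rcases hnm.lt_or_gt with h | h
    · rw [mul_comm, horth h]
    · exact horth h
  · rw [hfapply le_rfl, hP.fapply_mul_of_isMonicOfDegree (hmonic n)]
    exact neg_ne_zero.mpr (mul_ne_zero (hd n) (hP.fapply_mul_self_ne_zero n))

end IsSMOP

theorem hasTTRR_iff {P : ℕ → ℂ[X]} {a b : ℕ → ℂ} :
    HasTTRR P a b ↔ P 0 = 1 ∧ P 1 = X - C (b 0) ∧
      ∀ n, P (n + 2) = (X - C (b (n + 1))) * P (n + 1) - C (a (n + 1)) * P n := by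
  refine and_congr_right fun h0 => and_congr ?_ ⟨fun h n => ?_, fun h n hn => ?_⟩
  · rw [h0, mul_one, mul_one, eq_sub_iff_add_eq, eq_comm]
  · have := h (n + 1) n.succ_pos
    rw [Nat.add_sub_cancel] at this
    linear_combination -this
  · obtain ⟨k, rfl⟩ := Nat.exists_eq_add_of_le' hn
    rw [Nat.add_sub_cancel]
    linear_combination -h k

namespace HasTTRR

variable {P : ℕ → ℂ[X]} {a b : ℕ → ℂ}

theorem zero (hP : HasTTRR P a b) : P 0 = 1 := hP.1

theorem one (hP : HasTTRR P a b) : P 1 = X - C (b 0) := (hasTTRR_iff.mp hP).2.1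

theorem add_two (hP : HasTTRR P a b) (n : ℕ) :
    P (n + 2) = (X - C (b (n + 1))) * P (n + 1) - C (a (n + 1)) * P n :=
  (hasTTRR_iff.mp hP).2.2 n

theorem isMonicOfDegree (hP : HasTTRR P a b) : ∀ n, IsMonicOfDegree (P n) n
  | 0 => isMonicOfDegree_zero_iff.mpr hP.zero
  | 1 => hP.one ▸ isMonicOfDegree_X_sub_one (b 0)
  | n + 2 => by
    have hlead := (isMonicOfDegree_X_sub_one (b (n + 1))).mul (hP.isMonicOfDegree (n + 1))
    rw [hP.add_two, show n + 2 = 1 + (n + 1) by ring]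
    refine hlead.sub ((natDegree_C_mul_le _ _).trans_lt ?_)
    rw [(hP.isMonicOfDegree n).natDegree_eq]
    omega

theorem coeffs_eq_of_add_two_eq (hP : HasTTRR P a b) {n : ℕ} {α β : ℂ}
    (h : P (n + 2) = (X - C β) * P (n + 1) - C α * P n) : b (n + 1) = β ∧ a (n + 1) = α := by
  have hlin : C (b (n + 1) - β) * P (n + 1) = C (α - a (n + 1)) * P n := by
    rw [C_sub, C_sub]
    linear_combination hP.add_two n - h
  have hdiag : b (n + 1) = β := by
    have hcoeff := congrArg (coeff · (n + 1)) hlin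
    have hone : (P (n + 1)).coeff (n + 1) = 1 :=
      (isMonicOfDegree_iff _ _).mp (hP.isMonicOfDegree (n + 1)) |>.2
    have hzero : (P n).coeff (n + 1) = 0 :=
      coeff_eq_zero_of_natDegree_lt ((hP.isMonicOfDegree n).natDegree_eq.trans_lt n.lt_succ_self)
    simp only [coeff_C_mul, hone, hzero, mul_one, mul_zero] at hcoeff
    exact sub_eq_zero.mp hcoeff
  refine ⟨hdiag, ?_⟩
  rw [hdiag, sub_self, C_0, zero_mul, eq_comm, mul_eq_zero, C_eq_zero, sub_eq_zero] at hlin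
  exact (hlin.resolve_right (hP.isMonicOfDegree n).ne_zero).symm

theorem coRecursive {P₁ : ℕ → ℂ[X]} {c κ : ℂ} (hP : HasTTRR P a b)
    (hP₁ : HasTTRR P₁ (fun n => a (n + 1)) (fun n => b (n + 1))) (hκ : κ * (b 0 - c) = 1) :
    HasTTRR (fun n => C κ * ((X - C c) * P₁ n - P (n + 1))) (fun n => a (n + 1))
      (Function.update (fun n => b (n + 1)) 0 (b 1 - κ * a 1)) := by
  have hκC : C κ * (C (b 0) - C c) = (1 : ℂ[X]) := by rw [← C_sub, ← C_mul, hκ, C_1]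
  refine hasTTRR_iff.mpr ⟨?_, ?_, fun n => ?_⟩
  · rw [hP₁.zero, hP.one]
    linear_combination hκC
  · rw [hP₁.one, hP.add_two 0, hP.one, hP.zero, Function.update_self, C_sub, C_mul]
    linear_combination (X - C (b 1)) * hκC
  · rw [hP₁.add_two, hP.add_two (n + 1), Function.update_of_ne n.succ_ne_zero]
    ring

end HasTTRR

/-- The Jacobi matrix `jacobi a b` is `c + LU`, where `L` is unit lower
bidiagonal with subdiagonal `l`, and `U` is upper bidiagonal with diagonal `-d` and
superdiagonal `1`. -/
structure IsLUFactorization (c : ℂ) (d l a b : ℕ → ℂ) : Prop where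
  diag_zero : b 0 = c - d 0
  diag_succ : ∀ n, b (n + 1) = c + l n - d (n + 1)
  subdiag : ∀ n, a (n + 1) = -(l n * d n)

/-- The Jacobi matrix `jacobi a b` is `c + UL`, for the same factors as in
`IsLUFactorization`. -/
structure IsULFactorization (c : ℂ) (d l a b : ℕ → ℂ) : Prop where
  diag : ∀ n, b n = c + l n - d n
  subdiag : ∀ n, a (n + 1) = -(l n * d (n + 1))

section Factorization

variable {c : ℂ} {d l a b : ℕ → ℂ}

theorem IsULFactorization.tail (h : IsULFactorization c d l a b) :
    IsULFactorization c (fun n => d (n + 1)) (fun n => l (n + 1)) (fun n => a (n + 1))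
      (fun n => b (n + 1)) :=
  ⟨fun n => h.diag (n + 1), fun n => h.subdiag (n + 1)⟩

-- Since `κ = -1 / d 0`, the term `κ * a 1` is the corner entry `l 0` by which the truncation of `LU`
-- exceeds the product of the truncated factors.
theorem IsLUFactorization.tail {κ : ℂ} (h : IsLUFactorization c d l a b)
    (hκ : κ * (b 0 - c) = 1) :
    IsLUFactorization c (fun n => d (n + 1)) (fun n => l (n + 1)) (fun n => a (n + 1))
      (Function.update (fun n => b (n + 1)) 0 (b 1 - κ * a 1)) := by
  refine ⟨?_, fun n => ?_, fun n => h.subdiag (n + 1)⟩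
  · rw [h.diag_zero] at hκ
    rw [Function.update_self, h.diag_succ 0, h.subdiag 0]
    linear_combination -l 0 * hκ
  · rw [Function.update_of_ne n.succ_ne_zero, h.diag_succ]

end Factorization

namespace IsChristoffelPair

variable {c : ℂ} {d l a b a' b' : ℕ → ℂ} {S T : ℕ → ℂ[X]}

theorem isLUFactorization (h : IsChristoffelPair c d l S T) (hS : HasTTRR S a b) :
    IsLUFactorization c d l a b := by
  have hdiag_zero : b 0 = c - d 0 := by
    have h0 := h.X_sub_C_mul 0
    rw [← h.zero, hS.zero, hS.one] at h0
    apply C_injective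
    rw [C_sub]
    linear_combination h0
  have hcoeffs : ∀ n, b (n + 1) = c + l n - d (n + 1) ∧ a (n + 1) = -(l n * d n) := by
    intro n
    apply hS.coeffs_eq_of_add_two_eq
    simp only [C_sub, C_add, C_neg, C_mul]
    linear_combination (C c - X) * h.succ n - C (l n) * h.X_sub_C_mul n - h.X_sub_C_mul (n + 1)
  exact ⟨hdiag_zero, fun n => (hcoeffs n).1, fun n => (hcoeffs n).2⟩

theorem isULFactorization (h : IsChristoffelPair c d l S T) (hT : HasTTRR T a b) :
    IsULFactorization c d l a b := by
  have hdiag_zero : b 0 = c + l 0 - d 0 := by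
    have h0 := h.X_sub_C_mul 0
    rw [h.succ, h.zero, hT.zero, hT.one] at h0
    apply C_injective
    rw [C_sub, C_add]
    linear_combination h0
  have hcoeffs : ∀ n, b (n + 1) = c + l (n + 1) - d (n + 1) ∧ a (n + 1) = -(l n * d (n + 1)) := by
    intro n
    apply hT.coeffs_eq_of_add_two_eq
    simp only [C_sub, C_add, C_neg, C_mul]
    linear_combination C (d (n + 1)) * h.succ n - h.succ (n + 1) - h.X_sub_C_mul (n + 1)
  refine ⟨fun n => ?_, fun n => (hcoeffs n).2⟩
  cases n with
  | zero => exact hdiag_zero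
  | succ n => exact (hcoeffs n).1

theorem of_hasTTRR (hLU : IsLUFactorization c d l a b) (hUL : IsULFactorization c d l a' b')
    (hS : HasTTRR S a b) (hT : HasTTRR T a' b') : IsChristoffelPair c d l S T := by
  have hrel : ∀ n, S (n + 1) = T (n + 1) + C (l n) * T n ∧
      (X - C c) * T n = S (n + 1) - C (d n) * S n := by
    intro n
    induction n with
    | zero =>
      rw [hS.one, hT.one, hS.zero, hT.zero, hLU.diag_zero, hUL.diag]
      simp only [C_sub, C_add]
      constructor <;> ring
    | succ n ih =>
      obtain ⟨hsucc, hmul⟩ := ih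
      have hS2 := hS.add_two n
      have hT2 := hT.add_two n
      rw [hLU.diag_succ, hLU.subdiag] at hS2
      rw [hUL.diag, hUL.subdiag] at hT2
      simp only [C_sub, C_add, C_neg, C_mul] at hS2 hT2
      have hmul' : (X - C c) * T (n + 1) = S (n + 2) - C (d (n + 1)) * S (n + 1) := by
        linear_combination (C c - X) * hsucc - C (l n) * hmul - hS2
      exact ⟨by linear_combination C (d (n + 1)) * hsucc - hmul' - hT2, hmul'⟩
  exact ⟨hS.zero.trans hT.zero.symm, fun n => (hrel n).1, fun n => (hrel n).2⟩

end IsChristoffelPair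

theorem IsSMOP.christoffel_zero {u a b : ℕ → ℂ} {P : ℕ → ℂ[X]} (hP : IsSMOP u P)
    (hrec : HasTTRR P a b) (c : ℂ) : christoffel c u 0 = u 0 * (b 0 - c) := by
  have h := hP.fapply_mul_of_ne one_ne_zero
  rw [hrec.zero, hrec.one, ← fapply_christoffel, ← monomial_zero_one, fapply_monomial] at h
  unfold christoffel at h ⊢
  linear_combination h

/-- the first-kind associated polynomials `(P̃^{(1)}_n)` of the Christoffel
transformation `ũ = (x-c)u` are orthogonal with respect to the Christoffel transformation
`(x-c)u^α` of the functional `u^α` whose SMOP is the co-recursive sequence `(R_n)`. -/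
theorem stmt_13 (u : ℕ → ℂ) (c : ℂ) (P : ℕ → Polynomial ℂ) (hP : IsSMOP u P)
    (a b : ℕ → ℂ) (hrec : HasTTRR P a b) (ha : ∀ n, 1 ≤ n → a n ≠ 0)
    (hc : ∀ n, (P n).eval c ≠ 0)
    (P1 : ℕ → Polynomial ℂ)
    (hP1 : HasTTRR P1 (fun n => a (n + 1)) (fun n => b (n + 1)))
    (ut : ℕ → ℂ) (hut : ∀ n, ut n = u (n + 1) - c * u n) (hut0 : ut 0 ≠ 0)
    (Pt : ℕ → Polynomial ℂ) (hPt : IsSMOP ut Pt)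
    (at_ bt : ℕ → ℂ) (hrect : HasTTRR Pt at_ bt)
    (Pt1 : ℕ → Polynomial ℂ)
    (hPt1 : HasTTRR Pt1 (fun n => at_ (n + 1)) (fun n => bt (n + 1)))
    (R : ℕ → Polynomial ℂ)
    (hR : ∀ n, R n = C (u 0 / ut 0) * ((X - C c) * P1 n - P (n + 1)))
    (uα : ℕ → ℂ) (huα : IsSMOP uα R) :
    (∀ n m, n ≠ m → fapply (fun k => uα (k + 1) - c * uα k) (Pt1 n * Pt1 m) = 0)
    ∧ (∀ n, fapply (fun k => uα (k + 1) - c * uα k) (Pt1 n * Pt1 n) ≠ 0) := by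
  obtain rfl : ut = christoffel c u := funext hut
  obtain rfl : R = fun n => C (u 0 / christoffel c u 0) * ((X - C c) * P1 n - P (n + 1)) :=
    funext hR
  obtain ⟨d, l, hd, hpair⟩ := hP.exists_isChristoffelPair hPt
  have hκ : u 0 / christoffel c u 0 * (b 0 - c) = 1 := by
    rw [div_mul_eq_mul_div, ← hP.christoffel_zero hrec, div_self hut0]
  have hLU := (hpair.isLUFactorization hrec).tail hκ
  have hUL := (hpair.isULFactorization hrect).tail
  have hpair₁ := IsChristoffelPair.of_hasTTRR hLU hUL (hrec.coRecursive hP1 hκ) hPt1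
  exact (huα.christoffel_of_X_sub_C_mul (fun n => hd (n + 1)) hpair₁.X_sub_C_mul).2.2
end
end
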